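/- For any extended target P(x_{0:K}) = Γ(x_{0:K})/Z of backward-kernel form, the variance of the weight w = Γ/Q under Q decomposes as var_Q[w(x_{0:K})] = var_{q_K}[γ(x_K)/q_K(x_K)] + E_{q_K}[var_{Q(·|x_K)}[w(x_{0:K})]], and hence var_Q[w] ≥ var_{q_K}[γ(x_K)/q_K(x_K)], with equality when B_k = B_k^{opt}. -/

import Mathlib

/-!
Split a path as `x = Fin.snoc z y`, with `y` the final state and `z : Fin K → E` the earlier states.
Three facts then give the result:

* `Q` is a probability density (`chain_total`, integrating the states from last to first);
* its marginal in `y` is `q_K`, and the marginal of `Γ` is `γ` (both from `chain_marginal`, which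
  integrates the states from first to last; for `Γ` it is applied to the constant marginals `1`);
* consequently `E_Q[w | y] = γ y / q_K y`, and `core` expands all the squares: with `Z = ∫ γ`, the
  three integrals in the decomposition equal `∫ Q w² - Z²`, `∫ γ² / q_K - Z²` and
  `∫ Q w² - ∫ γ² / q_K`.

By telescoping, `∏ q_k F_{k+1} / q_{k+1} = Q / q_K`. Hence this product is the conditional density
of `z` given `y`, and the optimal weight is `γ / q_K` evaluated at the final state, whose variance
is the lower bound.

No measurability is assumed, so it has to be extracted from the integrability of `Q w²` and of
`Q (γ / q_K)²`. For fixed `z`, the map `y ↦ Q (z, y)` is measurable, being a multiple of the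
integrable density `F_K (z_last, ·)` (or equal to `π₀` when `K = 0`). Almost every slice of
`Q (γ / q_K)²` is measurable as well, so `γ / q_K` is; dividing gives joint measurability of `Q`,
then of `Γ = √(Q · Q w²)`, and by marginalization of `q_K` and `γ`.
-/

open MeasureTheory Finset

theorem aemeas_snoc {n : ℕ} {E β : Type*} [MeasureSpace E] [SigmaFinite (volume : Measure E)]
    [MeasurableSpace β] {f : (Fin (n+1) → E) → β} :
    AEMeasurable f ↔
     AEMeasurable (fun p : E × (Fin n → E) => f (Fin.snoc p.2 p.1)) := by
  have h := (volume_preserving_piFinSuccAbove (fun _ : Fin (n+1) => E) (Fin.last n)).symm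
  rw [← h.aemeasurable_comp_iff (MeasurableEquiv.measurableEmbedding _)]
  simp [Function.comp_def, MeasurableEquiv.piFinSuccAbove, Fin.insertNthEquiv, Fin.insertNth_last']

theorem aemeas_cons {n : ℕ} {E β : Type*} [MeasureSpace E] [SigmaFinite (volume : Measure E)]
    [MeasurableSpace β] {f : (Fin (n+1) → E) → β} :
    AEMeasurable f ↔
     AEMeasurable (fun p : E × (Fin n → E) => f (Fin.cons p.1 p.2)) := by
  have h := (volume_preserving_piFinSuccAbove (fun _ : Fin (n+1) => E) 0).symm
  rw [← h.aemeasurable_comp_iff (MeasurableEquiv.measurableEmbedding _)]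
  simp [Function.comp_def, MeasurableEquiv.piFinSuccAbove, Fin.insertNthEquiv, Fin.insertNth_zero']

theorem lint_snoc {n : ℕ} {E : Type*} [MeasureSpace E] [SigmaFinite (volume : Measure E)]
    (f : (Fin (n+1) → E) → ENNReal) :
    ∫⁻ x, f x = ∫⁻ p : E × (Fin n → E), f (Fin.snoc p.2 p.1) := by
  have h := (volume_preserving_piFinSuccAbove (fun _ : Fin (n+1) => E) (Fin.last n)).symm
  rw [← h.lintegral_comp_emb (MeasurableEquiv.measurableEmbedding _)]
  simp [MeasurableEquiv.piFinSuccAbove, Fin.insertNthEquiv, Fin.insertNth_last']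

theorem lint_cons {n : ℕ} {E : Type*} [MeasureSpace E] [SigmaFinite (volume : Measure E)]
    (f : (Fin (n+1) → E) → ENNReal) :
    ∫⁻ x, f x = ∫⁻ p : E × (Fin n → E), f (Fin.cons p.1 p.2) := by
  have h := (volume_preserving_piFinSuccAbove (fun _ : Fin (n+1) => E) 0).symm
  rw [← h.lintegral_comp_emb (MeasurableEquiv.measurableEmbedding _)]
  simp [MeasurableEquiv.piFinSuccAbove, Fin.insertNthEquiv, Fin.insertNth_zero']

theorem int_snoc {n : ℕ} {E : Type*} [MeasureSpace E] [SigmaFinite (volume : Measure E)]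
    (f : (Fin (n+1) → E) → ℝ) :
    ∫ x, f x = ∫ p : E × (Fin n → E), f (Fin.snoc p.2 p.1) := by
  have h := (volume_preserving_piFinSuccAbove (fun _ : Fin (n+1) => E) (Fin.last n)).symm
  rw [← h.integral_comp (MeasurableEquiv.measurableEmbedding _)]
  simp [MeasurableEquiv.piFinSuccAbove, Fin.insertNthEquiv, Fin.insertNth_last']

theorem integrable_snoc {n : ℕ} {E : Type*} [MeasureSpace E] [SigmaFinite (volume : Measure E)]
    {f : (Fin (n+1) → E) → ℝ} :
    Integrable f ↔ Integrable (fun p : E × (Fin n → E) => f (Fin.snoc p.2 p.1)) := by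
  have h := (volume_preserving_piFinSuccAbove (fun _ : Fin (n+1) => E) (Fin.last n)).symm
  rw [← h.integrable_comp_emb (MeasurableEquiv.measurableEmbedding _)]
  simp [Function.comp_def, MeasurableEquiv.piFinSuccAbove, Fin.insertNthEquiv, Fin.insertNth_last']

theorem aemeas_slice {α β : Type*} [MeasurableSpace α] [MeasurableSpace β] {μ : Measure α}
   {ν : Measure β} [SFinite μ] [SFinite ν] {f : α × β → ENNReal} (hf : AEMeasurable f (μ.prod ν)) :
   ∀ᵐ x ∂μ, AEMeasurable (fun y => f (x, y)) ν :=
  hf.aestronglyMeasurable.prodMk_left.mono fun _ h => h.aemeasurable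

/-- The unnormalized density `p (x 0) * ∏ k, T k (x k) (x (k+1))` of a Markov chain with normalized
transition densities has the same total mass as its initial density. The transitions are only
measurable in their second argument; Tonelli's theorem uses joint measurability of the whole
product. -/
theorem chain_total {E : Type*} [MeasureSpace E] [SigmaFinite (volume : Measure E)] :
    ∀ (n : ℕ) (p : E → ENNReal) (T : Fin n → E → E → ENNReal),
    (∀ k y, AEMeasurable (T k y)) → (∀ k y, ∫⁻ x, T k y x = 1) →
    AEMeasurable (fun x : Fin (n+1) → E => p (x 0) * ∏ k : Fin n, T k (x k.castSucc) (x k.succ)) →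
    ∫⁻ x : Fin (n+1) → E, p (x 0) * ∏ k : Fin n, T k (x k.castSucc) (x k.succ) = ∫⁻ y, p y := by
  intro n
  induction n with
  | zero =>
    intro p T _ hT hm
    have h := (volume_preserving_funUnique (Fin 1) E).lintegral_comp_emb
      (MeasurableEquiv.measurableEmbedding _) p
    simp only [Finset.univ_eq_empty, Finset.prod_empty, mul_one]
    convert h
    rfl
  | succ n ih =>
    intro p T hTm hT hm
    have hstep : ∀ z : Fin (n+1) → E, ∫⁻ y, p ((Fin.snoc z y : Fin (n+2) → E) 0) *
        ∏ k : Fin (n+1), T k ((Fin.snoc z y : Fin (n+2) → E) k.castSucc)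
          ((Fin.snoc z y : Fin (n+2) → E) k.succ)
        = p (z 0) * ∏ k : Fin n, T k.castSucc (z k.castSucc) (z k.succ) := by
      intro z
      have h0 : ∀ y, (Fin.snoc z y : Fin (n+2) → E) 0 = z 0 := fun y => by
        rw [← Fin.castSucc_zero, Fin.snoc_castSucc]
      simp only [Fin.prod_univ_castSucc, Fin.succ_castSucc, Fin.snoc_castSucc, Fin.succ_last,
        Fin.snoc_last, h0, ← mul_assoc]
      rw [lintegral_const_mul'' _ (hTm _ _), hT, mul_one]
    rw [lint_snoc]
    -- Integrate out the last state first; its transition density has mass one.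
    rw [aemeas_snoc] at hm
    rw [Measure.volume_eq_prod, lintegral_prod_symm _ hm]
    simp only [hstep]
    refine ih p (fun k => T k.castSucc) (fun k => hTm _) (fun k => hT _) ?_
    have := AEMeasurable.lintegral_prod_left' hm
    simpa only [hstep] using this

/-- If the `p k` satisfy the forward recursion `p (k+1) x = ∫ p k y * T k y x dy`, then `p n` is the
final marginal of the chain `p 0 (x 0) * ∏ k, T k (x k) (x (k+1))`. The `T k` need not be
normalized, so this also covers backward kernels, with `p k = 1`. -/
theorem chain_marginal {E : Type*} [MeasureSpace E] [SigmaFinite (volume : Measure E)] :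
    ∀ (n : ℕ) (p : Fin (n+1) → E → ENNReal) (T : Fin n → E → E → ENNReal),
    (∀ k x, AEMeasurable fun y => p k.castSucc y * T k y x) →
    (∀ k x, p k.succ x = ∫⁻ y, p k.castSucc y * T k y x) →
    AEMeasurable (fun x : Fin (n+1) → E => p 0 (x 0) * ∏ k : Fin n, T k (x k.castSucc) (x k.succ)) →
    ∀ᵐ y : E, ∫⁻ z : Fin n → E, p 0 ((Fin.snoc z y : Fin (n+1) → E) 0) *
      ∏ k : Fin n, T k ((Fin.snoc z y : Fin (n+1) → E) k.castSucc)
          ((Fin.snoc z y : Fin (n+1) → E) k.succ) = p (Fin.last n) y := by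
  intro n
  induction n with
  | zero =>
    intro p T _ _ _
    refine Filter.Eventually.of_forall fun y => ?_
    rw [lintegral_unique, volume_pi, Measure.pi_of_empty]
    simp [Fin.snoc]
  | succ n ih =>
    intro p T hpm hp hm
    have hstep : ∀ z : Fin (n+1) → E, ∫⁻ y, p 0 ((Fin.cons y z : Fin (n+2) → E) 0) *
        ∏ k : Fin (n+1), T k ((Fin.cons y z : Fin (n+2) → E) k.castSucc)
          ((Fin.cons y z : Fin (n+2) → E) k.succ)
        = p 1 (z 0) * ∏ k : Fin n, T k.succ (z k.castSucc) (z k.succ) := by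
      intro z
      simp only [Fin.prod_univ_succ, Fin.castSucc_zero, ← Fin.succ_castSucc, Fin.cons_succ,
        Fin.cons_zero, ← mul_assoc]
      have h1 := hpm 0 (z 0)
      have h2 := hp 0 (z 0)
      simp only [Fin.castSucc_zero, Fin.succ_zero_eq_one] at h1 h2
      rw [lintegral_mul_const'' _ h1, h2]
    -- Integrating out the first state replaces `p 0` by `p 1` and shortens the chain.
    have hm1 := hm
    rw [aemeas_cons] at hm1
    have hm2 := AEMeasurable.lintegral_prod_left' hm1
    simp only [hstep] at hm2
    have := ih (fun k => p k.succ) (fun k => T k.succ) (fun k x => by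
        simpa using hpm k.succ x) (fun k x => by simpa using hp k.succ x) (by simpa using hm2)
    rw [aemeas_snoc] at hm
    filter_upwards [this, aemeas_slice hm] with y hy hmy
    rw [← Fin.succ_last, ← hy, lint_cons]
    rw [aemeas_cons] at hmy
    rw [Measure.volume_eq_prod, lintegral_prod_symm _ hmy]
    refine lintegral_congr fun z => ?_
    have := hstep (Fin.snoc z y)
    simp only [Fin.cons_snoc_eq_snoc_cons] at this
    simpa using this

theorem integral_comb {α : Type*} [MeasurableSpace α] {μ : Measure α} {f g h : α → ℝ} {a b : ℝ}
    (hf : Integrable f μ) (hg : Integrable g μ) (hh : Integrable h μ) :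
    ∫ x, f x - a * g x + b * h x ∂μ = ∫ x, f x ∂μ - a * ∫ x, g x ∂μ + b * ∫ x, h x ∂μ := by
  have hfg : Integrable (fun x => f x - a * g x) μ := hf.sub (hg.const_mul _)
  rw [integral_add hfg (hh.const_mul _), integral_sub hf (hg.const_mul _), integral_const_mul,
    integral_const_mul]

/-- The variance decomposition for densities `Q`, `G` on a product space with first marginals `q`
and `γ`, where `Q` has total mass one: the law of total variance for `G / Q` conditionally on the
first coordinate, together with the variance of the weight `γ / q` of the first coordinate
alone. -/
theorem core {α β : Type*} [MeasurableSpace α] [MeasurableSpace β] {μ : Measure α}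
    {ν : Measure β} [SFinite μ] [SFinite ν] {Q G : α × β → ℝ} {q γ : α → ℝ}
    (hQ : AEMeasurable Q (μ.prod ν)) (hG : AEMeasurable G (μ.prod ν))
    (hQ0 : ∀ x, 0 < Q x) (hG0 : ∀ x, 0 < G x) (hq0 : ∀ y, 0 < q y) (hγ0 : ∀ y, 0 < γ y)
    (hQ1 : ∫⁻ x, ENNReal.ofReal (Q x) ∂(μ.prod ν) = 1)
    (hQq : ∀ᵐ y ∂μ, ∫⁻ z, ENNReal.ofReal (Q (y, z)) ∂ν = ENNReal.ofReal (q y))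
    (hGγ : ∀ᵐ y ∂μ, ∫⁻ z, ENNReal.ofReal (G (y, z)) ∂ν = ENNReal.ofReal (γ y))
    (hL2 : Integrable (fun x => Q x * (G x / Q x) ^ 2) (μ.prod ν))
    (hL2opt : Integrable (fun x => Q x * (γ x.1 / q x.1) ^ 2) (μ.prod ν)) :
    ((∫ x, Q x * (G x / Q x - ∫ y, γ y ∂μ) ^ 2 ∂(μ.prod ν)) =
      (∫ y, q y * (γ y / q y - ∫ y, γ y ∂μ) ^ 2 ∂μ) +
      ∫ y, q y * (∫ z, Q (y, z) / q y * (G (y, z) / Q (y, z) - γ y / q y) ^ 2 ∂ν) ∂μ) ∧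
    (∫ x, Q x * (γ x.1 / q x.1 - ∫ y, γ y ∂μ) ^ 2 ∂(μ.prod ν)) =
      (∫ y, q y * (γ y / q y - ∫ y, γ y ∂μ) ^ 2 ∂μ) := by
  have key : ∀ (R : α × β → ℝ) (r : α → ℝ), (∀ x, 0 < R x) → (∀ y, 0 < r y) →
      Integrable R (μ.prod ν) →
      (∀ᵐ y ∂μ, ∫⁻ z, ENNReal.ofReal (R (y, z)) ∂ν = ENNReal.ofReal (r y)) →
      (fun y => ∫ z, R (y, z) ∂ν) =ᵐ[μ] r := by
    intro R r hR hr hRi h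
    filter_upwards [h, hRi.prod_right_ae] with y hy hi
    have := ofReal_integral_eq_lintegral_ofReal hi (Filter.Eventually.of_forall fun z => (hR _).le)
    rw [hy] at this
    exact (ENNReal.ofReal_eq_ofReal_iff (integral_nonneg fun z => (hR _).le) (hr y).le).1 this
  have iQ : Integrable Q (μ.prod ν) :=
    (lintegral_ofReal_ne_top_iff_integrable hQ.aestronglyMeasurable
      (Filter.Eventually.of_forall fun z => (hQ0 _).le)).1 (by simp [hQ1])
  have tQ : ∫ x, Q x ∂(μ.prod ν) = 1 := by
    rw [integral_eq_lintegral_of_nonneg_ae (Filter.Eventually.of_forall fun z => (hQ0 _).le)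
      hQ.aestronglyMeasurable, hQ1]; simp
  have iG : Integrable G (μ.prod ν) := by
    -- With `w = G / Q`, `G = Q w ≤ Q + Q w²`.
    refine (iQ.add hL2).mono' hG.aestronglyMeasurable (Filter.Eventually.of_forall fun x => ?_)
    have h := hQ0 x
    have : G x = Q x * (G x / Q x) := by field_simp
    rw [Real.norm_of_nonneg (hG0 x).le]
    simp only [Pi.add_apply]
    generalize G x / Q x = w at *
    rw [this]
    nlinarith [mul_nonneg h.le (sq_nonneg (w - 1)), mul_nonneg h.le (sq_nonneg w)]
  have mQ := key Q q hQ0 hq0 iQ hQq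
  have mG := key G γ hG0 hγ0 iG hGγ
  have iq : Integrable q μ := iQ.integral_prod_left.congr mQ
  have iγ : Integrable γ μ := iG.integral_prod_left.congr mG
  have tq : ∫ y, q y ∂μ = 1 := by
    rw [← tQ, integral_prod _ iQ]; exact (integral_congr_ae mQ).symm
  have tG : ∫ x, G x ∂(μ.prod ν) = ∫ y, γ y ∂μ := by
    rw [integral_prod _ iG]; exact (integral_congr_ae mG)
  have mo : (fun y => ∫ z, Q (y, z) * (γ y / q y) ^ 2 ∂ν) =ᵐ[μ] fun y => γ y ^ 2 / q y := by
    filter_upwards [mQ] with y hy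
    have h := hq0 y
    rw [integral_mul_const, hy]; field_simp
  have ic : Integrable (fun y => γ y ^ 2 / q y) μ := hL2opt.integral_prod_left.congr mo
  have tc : ∫ x, Q x * (γ x.1 / q x.1) ^ 2 ∂(μ.prod ν) = ∫ y, γ y ^ 2 / q y ∂μ := by
    rw [integral_prod _ hL2opt]; exact integral_congr_ae mo
  set Z := ∫ y, γ y ∂μ with hZ
  have e1 : ∫ x, Q x * (G x / Q x - Z) ^ 2 ∂(μ.prod ν)
      = ∫ x, Q x * (G x / Q x) ^ 2 ∂(μ.prod ν) - Z ^ 2 := by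
    have : ∀ x, Q x * (G x / Q x - Z) ^ 2
        = Q x * (G x / Q x) ^ 2 - 2 * Z * G x + Z ^ 2 * Q x := fun x => by
      have := hQ0 x
      field_simp
      ring
    simp_rw [this]
    rw [integral_comb hL2 iG iQ, tQ, tG]
    ring
  have e2 : ∫ y, q y * (γ y / q y - Z) ^ 2 ∂μ = ∫ y, γ y ^ 2 / q y ∂μ - Z ^ 2 := by
    have : ∀ y, q y * (γ y / q y - Z) ^ 2
        = γ y ^ 2 / q y - 2 * Z * γ y + Z ^ 2 * q y := fun y => by
      have := hq0 y
      field_simp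
      ring
    simp_rw [this]
    rw [integral_comb ic iγ iq, tq, ← hZ]
    ring
  have e3 : (∫ y, q y * (∫ z, Q (y, z) / q y * (G (y, z) / Q (y, z) - γ y / q y) ^ 2 ∂ν) ∂μ)
      = ∫ x, Q x * (G x / Q x) ^ 2 ∂(μ.prod ν) - ∫ y, γ y ^ 2 / q y ∂μ := by
    rw [integral_prod _ hL2, ← integral_sub hL2.integral_prod_left ic]
    refine integral_congr_ae ?_
    filter_upwards [mQ, mG, hL2.prod_right_ae, iQ.prod_right_ae, iG.prod_right_ae]
      with y hy hy' h2 hQi hGi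
    have h := hq0 y
    rw [← integral_const_mul]
    have : ∀ z, q y * (Q (y, z) / q y * (G (y, z) / Q (y, z) - γ y / q y) ^ 2)
        = Q (y, z) * (G (y, z) / Q (y, z)) ^ 2 - 2 * (γ y / q y) * G (y, z)
          + (γ y / q y) ^ 2 * Q (y, z) := fun z => by
      have := hQ0 (y, z)
      field_simp
      ring
    simp_rw [this]
    rw [integral_comb h2 hGi hQi, hy, hy']
    field_simp
    ring
  refine ⟨by rw [e1, e2, e3]; ring, ?_⟩
  have iR : Integrable (fun x : α × β => Q x * (γ x.1 / q x.1 - Z) ^ 2) (μ.prod ν) := by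
    have hg : AEMeasurable (fun x : α × β => γ x.1 / q x.1) (μ.prod ν) :=
      (iγ.aemeasurable.div iq.aemeasurable).comp_quasiMeasurePreserving
        Measure.quasiMeasurePreserving_fst
    refine ((hL2opt.const_mul 2).add (iQ.const_mul (2 * Z ^ 2))).mono'
      (hQ.mul ((hg.sub_const Z).pow_const 2)).aestronglyMeasurable
      (Filter.Eventually.of_forall fun x => ?_)
    have h := (hQ0 x).le
    rw [Real.norm_of_nonneg (mul_nonneg h (sq_nonneg _))]
    simp only [Pi.add_apply]
    nlinarith [mul_nonneg h (sq_nonneg (γ x.1 / q x.1 + Z))]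
  rw [integral_prod _ iR]
  refine integral_congr_ae ?_
  filter_upwards [mQ] with y hy
  rw [integral_mul_const, hy]

/-- Law-of-total-variance decomposition for AIS importance weights, the
resulting lower bound on the variance, and its attainment by the optimal
(time-reversal) backward kernels. -/
theorem ais_weight_variance_decomposition
    (d K : ℕ)
    (γ π0 : (Fin d → ℝ) → ℝ) (Z : ℝ)
    (F : Fin K → (Fin d → ℝ) → (Fin d → ℝ) → ℝ)
    (B : Fin K → (Fin d → ℝ) → (Fin d → ℝ) → ℝ)
    (q : Fin (K + 1) → (Fin d → ℝ) → ℝ)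
    (Qd Γd Γopt w wopt : (Fin (K + 1) → Fin d → ℝ) → ℝ)
    (hq0 : q 0 = π0)
    (hqrec : ∀ (k : Fin K) (x : Fin d → ℝ),
      q k.succ x = ∫ y, q k.castSucc y * F k y x)
    -- forward proposal, extended targets and importance weights
    (hQd : ∀ x, Qd x = π0 (x 0) * ∏ k : Fin K, F k (x k.castSucc) (x k.succ))
    (hΓd : ∀ x, Γd x =
      γ (x (Fin.last K)) * ∏ k : Fin K, B k (x k.succ) (x k.castSucc))
    (hΓopt : ∀ x, Γopt x = γ (x (Fin.last K)) * ∏ k : Fin K,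
      q k.castSucc (x k.castSucc) * F k (x k.castSucc) (x k.succ) /
        q k.succ (x k.succ))
    (hw : ∀ x, w x = Γd x / Qd x)
    (hwopt : ∀ x, wopt x = Γopt x / Qd x)
    -- positivity and normalization
    (hγpos : ∀ x, 0 < γ x) (hπ0pos : ∀ x, 0 < π0 x)
    (hπ0norm : (∫ x, π0 x) = 1)
    (hFpos : ∀ k y x, 0 < F k y x)
    (hFnorm : ∀ (k : Fin K) (y : Fin d → ℝ), (∫ x, F k y x) = 1)
    (hBpos : ∀ k y x, 0 < B k y x)
    (hBnorm : ∀ (k : Fin K) (y : Fin d → ℝ), (∫ x, B k y x) = 1)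
    (hqpos : ∀ k x, 0 < q k x)
    (hZ : Z = ∫ x, γ x)
    -- square integrability of the weight under Q
    (hL2 : Integrable (fun x => Qd x * (w x) ^ 2))
    (hL2opt : Integrable (fun x => Qd x * (wopt x) ^ 2)) :
    -- var_Q[w] = var_{q_K}[γ/q_K] + E_{q_K}[var_{Q(·|x_K)}[w]]
    ((∫ x, Qd x * (w x - Z) ^ 2)
      = (∫ y, q (Fin.last K) y * (γ y / q (Fin.last K) y - Z) ^ 2) +
        (∫ y, q (Fin.last K) y *
          (∫ z : Fin K → Fin d → ℝ,
            (∏ k : Fin K,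
              q k.castSucc ((Fin.snoc z y : Fin (K + 1) → Fin d → ℝ) k.castSucc) *
                F k ((Fin.snoc z y : Fin (K + 1) → Fin d → ℝ) k.castSucc) ((Fin.snoc z y : Fin (K + 1) → Fin d → ℝ) k.succ) /
                  q k.succ ((Fin.snoc z y : Fin (K + 1) → Fin d → ℝ) k.succ)) *
              (w ((Fin.snoc z y : Fin (K + 1) → Fin d → ℝ)) - γ y / q (Fin.last K) y) ^ 2)))
    ∧
    -- var_Q[w] ≥ var_{q_K}[γ/q_K]
    ((∫ y, q (Fin.last K) y * (γ y / q (Fin.last K) y - Z) ^ 2) ≤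
      ∫ x, Qd x * (w x - Z) ^ 2)
    ∧
    -- equality for the optimal backward kernels
    ((∫ x, Qd x * (wopt x - Z) ^ 2)
      = ∫ y, q (Fin.last K) y * (γ y / q (Fin.last K) y - Z) ^ 2) := by
  set g : (Fin d → ℝ) → ℝ := fun y => γ y / q (Fin.last K) y with hg_def
  have hQpos : ∀ x, 0 < Qd x := fun x => by
    rw [hQd]; exact mul_pos (hπ0pos _) (Finset.prod_pos fun k _ => hFpos _ _ _)
  have hΓpos : ∀ x, 0 < Γd x := fun x => by
    rw [hΓd]; exact mul_pos (hγpos _) (Finset.prod_pos fun k _ => hBpos _ _ _)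
  have iπ : Integrable π0 := Integrable.of_integral_ne_zero (by rw [hπ0norm]; exact one_ne_zero)
  have iF : ∀ k y, Integrable (F k y) := fun k y =>
    Integrable.of_integral_ne_zero (by rw [hFnorm]; exact one_ne_zero)
  have iB : ∀ k y, Integrable (B k y) := fun k y =>
    Integrable.of_integral_ne_zero (by rw [hBnorm]; exact one_ne_zero)
  have iqF : ∀ (k : Fin K) x, Integrable (fun y => q k.castSucc y * F k y x) := fun k x =>
    Integrable.of_integral_ne_zero (by rw [← hqrec]; exact (hqpos _ _).ne')
  have tele : ∀ x : Fin (K + 1) → Fin d → ℝ, (∏ k : Fin K,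
      q k.castSucc (x k.castSucc) * F k (x k.castSucc) (x k.succ) / q k.succ (x k.succ))
      = Qd x / q (Fin.last K) (x (Fin.last K)) := by
    intro x
    -- Splitting `∏ q_i (x_i)` at either end gives `q_0 ∏ q_{k+1} = (∏ q_k) q_K`.
    have h1 := Fin.prod_univ_succ (fun i : Fin (K + 1) => q i (x i))
    rw [Fin.prod_univ_castSucc] at h1
    rw [Finset.prod_div_distrib, Finset.prod_mul_distrib, hQd, ← hq0,
      div_eq_div_iff (Finset.prod_pos fun k _ => hqpos _ _).ne' (hqpos _ _).ne']
    linear_combination (∏ k : Fin K, F k (x k.castSucc) (x k.succ)) * h1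
  have wopt_eq : ∀ x, wopt x = g (x (Fin.last K)) := by
    intro x
    have h := (hQpos x).ne'
    rw [hwopt, hΓopt, tele, hg_def]
    field_simp
  have hL2o : Integrable (fun p : (Fin d → ℝ) × (Fin K → Fin d → ℝ) =>
      Qd (Fin.snoc p.2 p.1) * (g p.1) ^ 2) := by
    have := integrable_snoc.1 hL2opt
    simpa only [wopt_eq, Fin.snoc_last] using this
  have hL2' : Integrable (fun p : (Fin d → ℝ) × (Fin K → Fin d → ℝ) =>
      Qd (Fin.snoc p.2 p.1) * (Γd (Fin.snoc p.2 p.1) / Qd (Fin.snoc p.2 p.1)) ^ 2) := by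
    have := integrable_snoc.1 hL2
    simpa only [hw] using this
  have hslice : ∀ z : Fin K → Fin d → ℝ, AEMeasurable (fun y => Qd (Fin.snoc z y)) := by
    intro z
    simp only [hQd]
    cases K with
    | zero => simpa [Fin.snoc] using iπ.aemeasurable
    | succ n =>
      have h0 : ∀ y, (Fin.snoc z y : Fin (n+2) → Fin d → ℝ) 0 = z 0 := fun y => by
        rw [← Fin.castSucc_zero, Fin.snoc_castSucc]
      simp only [Fin.prod_univ_castSucc, Fin.succ_castSucc, Fin.snoc_castSucc, Fin.succ_last,
        Fin.snoc_last, h0]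
      exact ((iF _ _).aemeasurable.const_mul _).const_mul _
  -- For a suitable `z`, both `Q (z, ·) g²` and `Q (z, ·)` are measurable, so `g` is as well.
  have mg : AEMeasurable g := by
    obtain ⟨z, hz⟩ := hL2o.prod_left_ae.exists
    have h1 := (hz.aemeasurable.div (hslice z)).sqrt
    refine h1.congr (Filter.Eventually.of_forall fun y => ?_)
    simp only [Pi.div_apply]
    rw [mul_div_cancel_left₀ _ (hQpos _).ne',
      Real.sqrt_sq (div_pos (hγpos _) (hqpos _ _)).le]
  have mg' : AEMeasurable (fun p : (Fin d → ℝ) × (Fin K → Fin d → ℝ) => g p.1) :=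
    mg.comp_quasiMeasurePreserving Measure.quasiMeasurePreserving_fst
  have hgpos : ∀ y, 0 < g y := fun y => div_pos (hγpos _) (hqpos _ _)
  have mQ : AEMeasurable (fun p : (Fin d → ℝ) × (Fin K → Fin d → ℝ) => Qd (Fin.snoc p.2 p.1)) := by
    refine (hL2o.aemeasurable.div (mg'.pow_const 2)).congr
      (Filter.Eventually.of_forall fun p => ?_)
    simp only [Pi.div_apply]
    rw [mul_div_cancel_right₀ _ (pow_pos (hgpos _) 2).ne']
  -- `Γ² = Q · (Q w²)`, so `Γ` is the square root of a measurable function.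
  have mΓ : AEMeasurable (fun p : (Fin d → ℝ) × (Fin K → Fin d → ℝ) => Γd (Fin.snoc p.2 p.1)) := by
    refine (mQ.mul hL2'.aemeasurable).sqrt.congr
      (Filter.Eventually.of_forall fun p => ?_)
    have h := (hQpos (Fin.snoc p.2 p.1)).ne'
    simp only [Pi.mul_apply]
    rw [← Real.sqrt_sq (hΓpos (Fin.snoc p.2 p.1)).le]
    congr 1
    rw [Real.sqrt_sq (hΓpos (Fin.snoc p.2 p.1)).le]
    field_simp
  have oQ : ∀ x, ENNReal.ofReal (Qd x) = ENNReal.ofReal (q 0 (x 0)) *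
      ∏ k : Fin K, ENNReal.ofReal (F k (x k.castSucc) (x k.succ)) := fun x => by
    rw [hQd, hq0, ENNReal.ofReal_mul (hπ0pos _).le,
      ENNReal.ofReal_prod_of_nonneg fun k _ => (hFpos _ _ _).le]
  have moQ : AEMeasurable (fun x : Fin (K + 1) → Fin d → ℝ => ENNReal.ofReal (Qd x)) :=
    aemeas_snoc.2 mQ.ennreal_ofReal
  have hQ1 : ∫⁻ p : (Fin d → ℝ) × (Fin K → Fin d → ℝ), ENNReal.ofReal (Qd (Fin.snoc p.2 p.1)) = 1 := by
    rw [← lint_snoc (fun x => ENNReal.ofReal (Qd x))]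
    simp only [oQ] at moQ ⊢
    rw [chain_total K (fun y => ENNReal.ofReal (q 0 y)) (fun k y x => ENNReal.ofReal (F k y x))
      (fun k y => (iF k y).aemeasurable.ennreal_ofReal) (fun k y => ?_) moQ, hq0,
      ← ofReal_integral_eq_lintegral_ofReal iπ (Filter.Eventually.of_forall fun _ => (hπ0pos _).le),
      hπ0norm, ENNReal.ofReal_one]
    rw [← ofReal_integral_eq_lintegral_ofReal (iF k y)
      (Filter.Eventually.of_forall fun _ => (hFpos _ _ _).le), hFnorm, ENNReal.ofReal_one]
  have hQq : ∀ᵐ y : Fin d → ℝ, ∫⁻ z : Fin K → Fin d → ℝ, ENNReal.ofReal (Qd (Fin.snoc z y))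
      = ENNReal.ofReal (q (Fin.last K) y) := by
    simp only [oQ] at moQ ⊢
    refine chain_marginal K (fun k y => ENNReal.ofReal (q k y))
      (fun k y x => ENNReal.ofReal (F k y x)) (fun k x => ?_) (fun k x => ?_) moQ
    · simp only [← ENNReal.ofReal_mul (hqpos _ _).le]
      exact (iqF k x).aemeasurable.ennreal_ofReal
    · simp only [← ENNReal.ofReal_mul (hqpos _ _).le]
      rw [← ofReal_integral_eq_lintegral_ofReal (iqF k x)
        (Filter.Eventually.of_forall fun _ => (mul_pos (hqpos _ _) (hFpos _ _ _)).le), hqrec]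
  have mq : AEMeasurable (q (Fin.last K)) := by
    have h := (AEMeasurable.lintegral_prod_right' mQ.ennreal_ofReal).congr hQq
    refine h.ennreal_toReal.congr (Filter.Eventually.of_forall fun y => ?_)
    exact ENNReal.toReal_ofReal (hqpos _ _).le
  have mγ : AEMeasurable γ := (mg.mul mq).congr (Filter.Eventually.of_forall fun y => by
    have := (hqpos (Fin.last K) y).ne'
    simp only [Pi.mul_apply, hg_def]
    field_simp)
  have mγ' : AEMeasurable (fun p : (Fin d → ℝ) × (Fin K → Fin d → ℝ) => γ p.1) :=
    mγ.comp_quasiMeasurePreserving Measure.quasiMeasurePreserving_fst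
  have hΓγ : ∀ᵐ y : Fin d → ℝ, ∫⁻ z : Fin K → Fin d → ℝ, ENNReal.ofReal (Γd (Fin.snoc z y))
      = ENNReal.ofReal (γ y) := by
    -- The product of backward kernels is `Γ / γ`, viewed as a chain with transitions
    -- `T k y x = B k x y` from `x_k = y` to `x_{k+1} = x`; its recursion is `1 = ∫ B k x y dy`.
    have mB : AEMeasurable (fun x : Fin (K + 1) → Fin d → ℝ =>
        (1 : ENNReal) * ∏ k : Fin K, ENNReal.ofReal (B k (x k.succ) (x k.castSucc))) := by
      refine aemeas_snoc.2 ((mΓ.div mγ').ennreal_ofReal.congr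
        (Filter.Eventually.of_forall fun p => ?_))
      simp only [Pi.div_apply]
      rw [hΓd, Fin.snoc_last, mul_div_cancel_left₀ _ (hγpos _).ne', one_mul,
        ENNReal.ofReal_prod_of_nonneg fun k _ => (hBpos _ _ _).le]
    have h := chain_marginal K (fun _ _ => 1) (fun k y x => ENNReal.ofReal (B k x y))
      (fun k x => by simpa using (iB k x).aemeasurable.ennreal_ofReal)
      (fun k x => by
        simp only [one_mul]
        rw [← ofReal_integral_eq_lintegral_ofReal (iB k x)
          (Filter.Eventually.of_forall fun _ => (hBpos _ _ _).le), hBnorm, ENNReal.ofReal_one]) mB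
    filter_upwards [h] with y hy
    simp only [hΓd, Fin.snoc_last, ENNReal.ofReal_mul (hγpos _).le]
    simp only [one_mul] at hy
    rw [lintegral_const_mul' _ _ ENNReal.ofReal_ne_top]
    simp only [ENNReal.ofReal_prod_of_nonneg fun k _ => (hBpos _ _ _).le]
    rw [hy, mul_one]
  obtain ⟨c1, c2⟩ := core mQ mΓ (fun _ => hQpos _) (fun _ => hΓpos _) (hqpos (Fin.last K)) hγpos
    hQ1 hQq hΓγ hL2' hL2o
  rw [← hZ] at c1 c2
  have c1' : ((∫ x, Qd x * (w x - Z) ^ 2)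
      = (∫ y, q (Fin.last K) y * (γ y / q (Fin.last K) y - Z) ^ 2) +
        (∫ y, q (Fin.last K) y *
          (∫ z : Fin K → Fin d → ℝ, Qd (Fin.snoc z y) / q (Fin.last K) y *
              (w ((Fin.snoc z y : Fin (K + 1) → Fin d → ℝ)) - γ y / q (Fin.last K) y) ^ 2))) := by
    rw [int_snoc]
    simp only [hw]
    exact c1
  simp only [tele, Fin.snoc_last]
  refine ⟨c1', ?_, ?_⟩
  · rw [c1']
    refine le_add_of_nonneg_right (integral_nonneg fun y => mul_nonneg (hqpos _ _).le
      (integral_nonneg fun z => mul_nonneg (div_pos (hQpos _) (hqpos _ _)).le (sq_nonneg _)))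
  · rw [int_snoc]
    simp only [wopt_eq, Fin.snoc_last]
    exact c2
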